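/- Let Ω ⊆ ℂⁿ be a bounded convex domain and τ a holomorphic automorphism of Ω. Then the following are equivalent: (1) τ is a generalized translation; (2) τ has no fixed points in Ω; (3) the sequence of iterates {τʲ}_{j≥1} is compactly divergent, i.e. for every compact K ⊆ Ω there exists N such that τʲ(K) ∩ K = ∅ for all j ≥ N. -/

import Mathlib

open scoped Manifold Topology
open Set Metric Filter

noncomputable section

/-- The complex Euclidean space `ℂⁿ`. -/
abbrev CSpace (n : ℕ) : Type := EuclideanSpace ℂ (Fin n)

/-- The `𝒪(Ω)`-convex hull of a set `K ⊆ Ω`. -/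
def OHull {n : ℕ} (Ω K : Set (CSpace n)) : Set (CSpace n) :=
  {x ∈ Ω | ∀ f : CSpace n → ℂ, DifferentiableOn ℂ f Ω → ‖f x‖ ≤ ⨆ y : K, ‖f ↑y‖}

/-- `τ` is a generalized translation of `Ω`: for every compact `𝒪(Ω)`-convex `K ⊆ Ω` there is
`j ≥ 1` with `τʲ(K) ∩ K = ∅` and `τʲ(K) ∪ K` again `𝒪(Ω)`-convex. -/
def IsGenTranslation {n : ℕ} (Ω : Set (CSpace n)) (τ : CSpace n → CSpace n) : Prop :=
  ∀ K : Set (CSpace n), IsCompact K → K ⊆ Ω → OHull Ω K = K →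
    ∃ j : ℕ, 1 ≤ j ∧ (τ^[j] '' K) ∩ K = ∅ ∧
      OHull Ω ((τ^[j] '' K) ∪ K) = (τ^[j] '' K) ∪ K

/-!
Holomorphic maps send analytic discs to analytic discs, so points joined by a disc satisfy Harnack's
inequality for every function with nonnegative real part, and stay joined under iteration. In a
convex domain the points of a compact set are joined by discs of uniform size: the curve
`ζ ↦ -η log (1 - s ζ)` runs from `0` to `1` inside a thin neighbourhood of a segment. Conversely, by
Harnack for supporting functionals, the points so joined to a compact set lie in a compact set.

If the iterates of `f` do not diverge compactly, some orbit visits a compact set infinitely often,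
and Całka's recurrence argument makes it relatively compact. By Earle–Hamilton, the contractions of
`f` towards a point `z` of that orbit have fixed points; discs keep them near the orbit, and in the
limit they yield a fixed point of `f`.

If the iterates diverge compactly, some orbit accumulates at a boundary point `p`. Let `h` be an
affine supporting functional at `p`, scaled so that `Re h` is large on `K`. By Harnack `h` is close
to `h p = 0` on a whole image `f^[j] '' K`, so `exp (-h)` separates this image from `K`, and then
Kallin's lemma makes their union holomorphically convex.
-/

section Convex

variable {E : Type*} [NormedAddCommGroup E] [NormedSpace ℝ E]

lemma isCompact_convexJoin {s t : Set E} (hs : IsCompact s) (ht : IsCompact t) :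
    IsCompact (convexJoin ℝ s t) := by
  convert (isCompact_Icc (a := (0 : ℝ)) (b := 1)).prod (hs.prod ht) |>.image
    (f := fun p : ℝ × E × E ↦ AffineMap.lineMap p.2.1 p.2.2 p.1) ?_ using 1
  · ext z
    simp only [mem_convexJoin, segment_eq_image_lineMap, mem_image, mem_prod, Prod.exists]
    grind
  · simp only [AffineMap.lineMap_apply_module]
    fun_prop

lemma exists_isCompact_lineMap_mem [ProperSpace E] {Ω A : Set E} (hΩo : IsOpen Ω)
    (hΩc : Convex ℝ Ω) (hΩb : Bornology.IsBounded Ω) (hA : IsCompact A) (hAΩ : A ⊆ Ω) {t : ℝ}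
    (ht : t ∈ Ico 0 1) :
    ∃ Q, IsCompact Q ∧ Q ⊆ Ω ∧ ∀ y ∈ A, ∀ w ∈ closure Ω, AffineMap.lineMap y w t ∈ Q := by
  refine ⟨(fun p : E × E ↦ AffineMap.lineMap p.1 p.2 t) '' A ×ˢ closure Ω,
    (hA.prod hΩb.isCompact_closure).image ?_, ?_,
    fun y hy w hw ↦ mem_image_of_mem _ (mk_mem_prod hy hw)⟩
  · simp only [AffineMap.lineMap_apply_module]
    fun_prop
  · rintro _ ⟨⟨y, w⟩, ⟨hy, hw⟩, rfl⟩
    rw [← hΩo.interior_eq] at hAΩ ⊢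
    dsimp only
    rw [AffineMap.lineMap_apply_module]
    exact hΩc.combo_interior_closure_mem_interior (hAΩ hy) hw (sub_pos.mpr ht.2) ht.1
      (sub_add_cancel _ _)

end Convex

section HolMapsTo

variable {E F G : Type*} [NormedAddCommGroup E] [NormedSpace ℂ E] [NormedAddCommGroup F]
  [NormedSpace ℂ F] [NormedAddCommGroup G] [NormedSpace ℂ G]

/-- `HolMapsTo f U V` says that `f` is holomorphic on `U` and maps `U` into `V`. With
`V = {w | 0 ≤ w.re}` this is the class of functions to which Harnack's inequality applies. -/
structure HolMapsTo (f : E → F) (U : Set E) (V : Set F) : Prop where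
  differentiableOn : DifferentiableOn ℂ f U
  mapsTo : MapsTo f U V

namespace HolMapsTo

variable {U : Set E} {V : Set F} {W : Set G}

lemma comp {g : F → G} {f : E → F} (hg : HolMapsTo g V W) (hf : HolMapsTo f U V) :
    HolMapsTo (g ∘ f) U W :=
  ⟨hg.differentiableOn.comp hf.differentiableOn hf.mapsTo, hg.mapsTo.comp hf.mapsTo⟩

lemma mono_right {f : E → F} {V' : Set F} (hf : HolMapsTo f U V) (hV : V ⊆ V') :
    HolMapsTo f U V' :=
  ⟨hf.differentiableOn, hf.mapsTo.mono_right hV⟩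

lemma iterate {f : E → E} (hf : HolMapsTo f U U) (n : ℕ) : HolMapsTo f^[n] U U :=
  ⟨hf.differentiableOn.iterate hf.mapsTo n, hf.mapsTo.iterate n⟩

lemma norm_sub_apply_zero_le {h : ℂ → ℂ} (hh : HolMapsTo h (ball 0 1) {w | 0 ≤ w.re}) {z : ℂ}
    (hz : z ∈ ball 0 1) : ‖h z - h 0‖ ≤ 2 * (h 0).re * ‖z‖ / (1 - ‖z‖) := by
  have h_zero : 0 ≤ (h 0).re := hh.mapsTo (mem_ball_self one_pos)
  have bound (M : ℝ) (hM : (h 0).re < M) : ‖h z - h 0‖ ≤ 2 * M * ‖z‖ / (1 - ‖z‖) := by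
    have h_maps : MapsTo (fun ζ ↦ h 0 - h ζ) (ball 0 1) {w | w.re ≤ M} := fun ζ hζ ↦ by
      have : 0 ≤ (h ζ).re := hh.mapsTo hζ
      rw [mem_ofPred_eq, Complex.sub_re]
      linarith
    rw [norm_sub_rev]
    exact Complex.borelCaratheodory_zero (h_zero.trans_lt hM) (hh.differentiableOn.const_sub _)
      h_maps one_pos hz (sub_self _)
  have h_lim : Tendsto (fun M : ℝ ↦ 2 * M * ‖z‖ / (1 - ‖z‖)) (𝓝[>] (h 0).re)
      (𝓝 (2 * (h 0).re * ‖z‖ / (1 - ‖z‖))) :=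
    (Continuous.tendsto (by fun_prop) _).mono_left nhdsWithin_le_nhds
  exact ge_of_tendsto h_lim (eventually_mem_nhdsWithin.mono bound)

end HolMapsTo

end HolMapsTo

section DiscJoined

variable {E F : Type*} [NormedAddCommGroup E] [NormedSpace ℂ E] [NormedAddCommGroup F]
  [NormedSpace ℂ F]

/-- An analytic disc in `Ω` takes the value `x` at `0` and `y` at `s`. For `0 < s < 1` this bounds
the Kobayashi distance of `x` and `y`: the infimum of such `s` is the Lempert function of `Ω`. -/
def DiscJoined (Ω : Set E) (s : ℝ) (x y : E) : Prop :=
  ∃ φ : ℂ → E, HolMapsTo φ (ball 0 1) Ω ∧ φ 0 = x ∧ φ s = y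

namespace DiscJoined

variable {Ω : Set E} {s : ℝ} {x y : E}

lemma map {f : E → F} {V : Set F} (hxy : DiscJoined Ω s x y) (hf : HolMapsTo f Ω V) :
    DiscJoined V s (f x) (f y) := by
  obtain ⟨φ, hφ, rfl, rfl⟩ := hxy
  exact ⟨f ∘ φ, hf.comp hφ, rfl, rfl⟩

lemma mono {V : Set E} (hxy : DiscJoined Ω s x y) (hΩ : Ω ⊆ V) : DiscJoined V s x y := by
  obtain ⟨φ, hφ, hx, hy⟩ := hxy
  exact ⟨φ, hφ.mono_right hΩ, hx, hy⟩

lemma norm_sub_le (hxy : DiscJoined Ω s x y) (hs : s ∈ Ioo 0 1) {h : E → ℂ}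
    (hh : HolMapsTo h Ω {w | 0 ≤ w.re}) : ‖h y - h x‖ ≤ 2 * (h x).re * s / (1 - s) := by
  obtain ⟨φ, hφ, rfl, rfl⟩ := hxy
  have hs_norm : ‖(s : ℂ)‖ = s := by rw [Complex.norm_real, Real.norm_of_nonneg hs.1.le]
  have hs_mem : (s : ℂ) ∈ ball 0 1 := by rw [mem_ball_zero_iff, hs_norm]; exact hs.2
  simpa only [hs_norm, Function.comp_apply] using (hh.comp hφ).norm_sub_apply_zero_le hs_mem

lemma re_le (hxy : DiscJoined Ω s x y) (hs : s ∈ Ioo 0 1) {h : E → ℂ}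
    (hh : HolMapsTo h Ω {w | 0 ≤ w.re}) : (h y).re ≤ (1 + s) / (1 - s) * (h x).re := by
  have hs' : 1 - s ≠ 0 := (sub_pos.mpr hs.2).ne'
  calc (h y).re = (h x).re + (h y - h x).re := by simp
    _ ≤ (h x).re + 2 * (h x).re * s / (1 - s) := by
      gcongr
      exact (Complex.re_le_norm _).trans (hxy.norm_sub_le hs hh)
    _ = (1 + s) / (1 - s) * (h x).re := by field_simp; ring

lemma norm_le (hxy : DiscJoined Ω s x y) (hs : s ∈ Ioo 0 1) {h : E → ℂ}
    (hh : HolMapsTo h Ω {w | 0 ≤ w.re}) : ‖h y‖ ≤ (1 + s) / (1 - s) * ‖h x‖ := by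
  have hs' : 0 < 1 - s := sub_pos.mpr hs.2
  have hs_nonneg : 0 ≤ s := hs.1.le
  calc ‖h y‖ ≤ ‖h x‖ + ‖h y - h x‖ := norm_le_norm_add_norm_sub' _ _
    _ ≤ ‖h x‖ + 2 * ‖h x‖ * s / (1 - s) := by
      gcongr
      refine (hxy.norm_sub_le hs hh).trans ?_
      gcongr
      exact Complex.re_le_norm _
    _ = (1 + s) / (1 - s) * ‖h x‖ := by field_simp; ring

lemma of_dist_lt {r : ℝ} (hs : 0 < s) (hx : ball x r ⊆ Ω) (hxy : dist x y < r * s) :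
    DiscJoined Ω s x y := by
  refine ⟨AffineMap.lineMap x (AffineMap.lineMap x y (s⁻¹ : ℂ)), ⟨?_, fun ζ hζ ↦ hx ?_⟩,
    by simp, ?_⟩
  · simp only [AffineMap.coe_lineMap, vsub_eq_sub, vadd_eq_add]
    fun_prop
  · rw [mem_ball_zero_iff] at hζ
    rw [mem_ball, dist_lineMap_left, dist_left_lineMap, norm_inv, Complex.norm_real,
      Real.norm_of_nonneg hs.le, inv_mul_eq_div]
    calc ‖ζ‖ * (dist x y / s) ≤ 1 * (dist x y / s) := by gcongr
      _ < r := by rwa [one_mul, div_lt_iff₀ hs]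
  · have : (s : ℂ) ≠ 0 := mod_cast hs.ne'
    simp [AffineMap.lineMap_apply, this]

lemma lineMap [NormedSpace ℝ E] [IsScalarTower ℝ ℂ E] {x' y' : E} {t : ℝ} (hΩ : Convex ℝ Ω)
    (h : DiscJoined Ω s x y) (h' : DiscJoined Ω s x' y') (ht : t ∈ Icc 0 1) :
    DiscJoined Ω s (AffineMap.lineMap x x' t) (AffineMap.lineMap y y' t) := by
  obtain ⟨φ, hφ, rfl, rfl⟩ := h
  obtain ⟨ψ, hψ, rfl, rfl⟩ := h'
  refine ⟨fun ζ ↦ AffineMap.lineMap (φ ζ) (ψ ζ) t,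
    ⟨?_, fun ζ hζ ↦ hΩ.lineMap_mem (hφ.mapsTo hζ) (hψ.mapsTo hζ) ht⟩, rfl, rfl⟩
  simp only [AffineMap.lineMap_apply_module, RCLike.real_smul_eq_coe_smul (K := ℂ)]
  exact (hφ.differentiableOn.const_smul _).add (hψ.differentiableOn.const_smul _)

end DiscJoined

lemma exists_discJoined_of_dist_lt {Ω K : Set E} (hΩ : IsOpen Ω) (hK : IsCompact K) (hKΩ : K ⊆ Ω)
    {s : ℝ} (hs : 0 < s) : ∃ δ > 0, ∀ x ∈ K, ∀ y, dist x y < δ → DiscJoined Ω s x y := by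
  obtain ⟨r, hr, hrΩ⟩ := hK.exists_thickening_subset_open hΩ hKΩ
  exact ⟨r * s, mul_pos hr hs, fun x hx y hxy ↦
    .of_dist_lt hs ((ball_subset_thickening hx r).trans hrΩ) hxy⟩

lemma mem_thickening_segment_zero_one {δ : ℝ} {z : ℂ} (hδ : 0 < δ) (h_left : -δ ≤ z.re)
    (h_right : z.re ≤ 1 + δ) (h_im : |z.im| ≤ 2 * δ) :
    z ∈ thickening (4 * δ) (segment ℝ (0 : ℂ) 1) := by
  obtain ⟨t, ht, hzt⟩ : ∃ t ∈ Icc (0 : ℝ) 1, |z.re - t| ≤ δ := by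
    refine ⟨max 0 (min 1 z.re), ⟨le_max_left _ _, max_le zero_le_one (min_le_left _ _)⟩, ?_⟩
    grind
  refine mem_thickening_iff.mpr ⟨t, ?_, ?_⟩
  · rw [segment_eq_image_lineMap]
    exact ⟨t, ht, by simp [AffineMap.lineMap_apply]⟩
  · rw [dist_eq_norm]
    calc ‖z - t‖ ≤ |(z - t).re| + |(z - t).im| := Complex.norm_le_abs_re_add_abs_im _
      _ ≤ δ + 2 * δ := by simpa using add_le_add hzt h_im
      _ < 4 * δ := by linarith

lemma neg_mul_log_mem_thickening {η : ℝ} {w : ℂ} (hη : 0 < η) (hw_re : 0 ≤ w.re) (hw_le : ‖w‖ ≤ 2)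
    (hw_ge : Real.exp (-η⁻¹) / 2 ≤ ‖w‖) :
    -(η * Complex.log w) ∈ thickening (4 * η) (segment ℝ (0 : ℂ) 1) := by
  have h_log_two : Real.log 2 ≤ 1 := by linarith [Real.log_two_lt_d9]
  have h_exp : 0 < Real.exp (-η⁻¹) / 2 := by positivity
  apply mem_thickening_segment_zero_one hη <;>
    simp only [Complex.neg_re, Complex.neg_im, Complex.re_ofReal_mul, Complex.im_ofReal_mul,
      Complex.log_re, Complex.log_im]
  · have : Real.log ‖w‖ ≤ 1 :=
      (Real.log_le_log (h_exp.trans_le hw_ge) hw_le).trans h_log_two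
    nlinarith
  · have h_log : -η⁻¹ - Real.log 2 ≤ Real.log ‖w‖ := by
      have := Real.log_le_log h_exp hw_ge
      rwa [Real.log_div (Real.exp_pos _).ne' two_ne_zero, Real.log_exp] at this
    calc -(η * Real.log ‖w‖) ≤ -(η * (-η⁻¹ - Real.log 2)) := by gcongr
      _ = 1 + η * Real.log 2 := by field_simp; ring
      _ ≤ 1 + η := by gcongr; exact mul_le_of_le_one_right hη.le h_log_two
  · rw [abs_neg, abs_mul, abs_of_pos hη, mul_comm]
    gcongr
    linarith [Complex.abs_arg_le_pi_div_two_iff.mpr hw_re, Real.pi_le_four]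

lemma exists_discJoined_thickening_segment_zero_one {δ : ℝ} (hδ : 0 < δ) :
    ∃ s ∈ Ioo (0 : ℝ) 1, DiscJoined (thickening δ (segment ℝ (0 : ℂ) 1)) s 0 1 := by
  obtain ⟨η, hη, rfl⟩ : ∃ η > 0, δ = 4 * η := ⟨δ / 4, by positivity, by ring⟩
  obtain ⟨s, ⟨hs_pos, hs_lt⟩, hs_exp⟩ :
      ∃ s ∈ Ioo (0 : ℝ) 1, (1 - s) * (1 + s) = Real.exp (-η⁻¹) := by
    have h_exp : Real.exp (-η⁻¹) < 1 := Real.exp_lt_one_iff.mpr (by simpa using hη)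
    have h_sq := Real.sq_sqrt (sub_nonneg.mpr h_exp.le)
    refine ⟨√(1 - Real.exp (-η⁻¹)), ⟨Real.sqrt_pos.mpr (sub_pos.mpr h_exp), ?_⟩, by grind⟩
    nlinarith [Real.exp_pos (-η⁻¹)]
  have h_norm {ζ : ℂ} (hζ : ζ ∈ ball 0 1) : ‖(s : ℂ) * ζ‖ ≤ s := by
    rw [norm_mul, Complex.norm_real, Real.norm_of_nonneg hs_pos.le]
    exact mul_le_of_le_one_right hs_pos.le (mem_ball_zero_iff.mp hζ).le
  have h_re {ζ : ℂ} (hζ : ζ ∈ ball 0 1) : 0 < (1 - s * ζ : ℂ).re := by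
    have := (Complex.re_le_norm (s * ζ)).trans (h_norm hζ)
    rw [Complex.sub_re, Complex.one_re]
    linarith
  refine ⟨s, ⟨hs_pos, hs_lt⟩, fun ζ ↦ -(η * Complex.log (1 - s * ζ)),
    ⟨fun ζ hζ ↦ ?_, fun ζ hζ ↦ ?_⟩, by simp, ?_⟩
  · have : 1 - s * ζ ∈ Complex.slitPlane := .inl (h_re hζ)
    fun_prop (disch := assumption)
  · refine neg_mul_log_mem_thickening hη (h_re hζ).le ?_ ?_
    · linarith [norm_sub_le (1 : ℂ) (s * ζ), h_norm hζ, norm_one (α := ℂ)]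
    · have := norm_sub_norm_le (1 : ℂ) (s * ζ)
      rw [norm_one] at this
      nlinarith [h_norm hζ]
  · have h_sq : (1 - s * s : ℂ) = Real.exp (-η⁻¹) := by
      rw [← hs_exp]
      push_cast
      ring
    have hη' : (η : ℂ) ≠ 0 := mod_cast hη.ne'
    beta_reduce
    rw [h_sq, ← Complex.ofReal_log (Real.exp_pos _).le, Real.log_exp]
    simp [hη']

variable [NormedSpace ℝ E] [IsScalarTower ℝ ℂ E]

lemma exists_discJoined_thickening_segment {ε D : ℝ} (hε : 0 < ε) (hD : 0 < D) :
    ∃ s ∈ Ioo (0 : ℝ) 1,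
      ∀ x y : E, dist x y ≤ D → DiscJoined (thickening ε (segment ℝ x y)) s x y := by
  obtain ⟨s, hs, h_zero_one⟩ := exists_discJoined_thickening_segment_zero_one (div_pos hε hD)
  refine ⟨s, hs, fun x y hxy ↦ ?_⟩
  have h_line : HolMapsTo (AffineMap.lineMap x y : ℂ → E) (thickening (ε / D) (segment ℝ (0 : ℂ) 1))
      (thickening ε (segment ℝ x y)) := by
    refine ⟨?_, fun ζ hζ ↦ ?_⟩
    · simp only [AffineMap.coe_lineMap, vsub_eq_sub, vadd_eq_add]
      fun_prop
    · rw [segment_eq_image_lineMap] at hζ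
      obtain ⟨_, ⟨t, ht, rfl⟩, hζt⟩ := mem_thickening_iff.mp hζ
      refine mem_thickening_iff.mpr
        ⟨_, lineMap_mem_segment ℝ x y ht, ?_⟩
      have h_real : AffineMap.lineMap x y t = AffineMap.lineMap x y (t : ℂ) := by
        simp [AffineMap.lineMap_apply, RCLike.real_smul_eq_coe_smul (K := ℂ)]
      rw [h_real, dist_lineMap_lineMap]
      calc dist ζ t * dist x y ≤ dist ζ t * D := by gcongr
        _ < ε := (lt_div_iff₀ hD).mp (by simpa [AffineMap.lineMap_apply] using hζt)
  simpa using h_zero_one.map h_line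

lemma exists_discJoined_of_isCompact {Ω K : Set E} (hΩo : IsOpen Ω) (hΩc : Convex ℝ Ω)
    (hK : IsCompact K) (hKΩ : K ⊆ Ω) :
    ∃ s ∈ Ioo (0 : ℝ) 1, ∀ x ∈ K, ∀ y ∈ K, DiscJoined Ω s x y := by
  obtain ⟨ε, hε, hεΩ⟩ := (isCompact_convexJoin hK hK).exists_thickening_subset_open hΩo
    (convexJoin_subset hKΩ hKΩ hΩc)
  obtain ⟨s, hs, h_joined⟩ := exists_discJoined_thickening_segment (E := E) hε
    (show 0 < diam K + 1 by positivity)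
  refine ⟨s, hs, fun x hx y hy ↦ ?_⟩
  have h_dist : dist x y ≤ diam K + 1 :=
    (dist_le_diam_of_mem hK.isBounded hx hy).trans (le_add_of_nonneg_right zero_le_one)
  have h_segment : thickening ε (segment ℝ x y) ⊆ thickening ε (convexJoin ℝ K K) :=
    thickening_subset_of_subset ε (segment_subset_convexJoin hx hy)
  exact (h_joined x y h_dist).mono (h_segment.trans hεΩ)

lemma DiscJoined.exists_eq_lineMap {Ω : Set E} {s : ℝ} {x y : E} (hΩ : Convex ℝ Ω)
    (hs : s ∈ Ioo 0 1) (hxy : DiscJoined Ω s x y) :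
    ∃ w ∈ closure Ω, x = AffineMap.lineMap y w (2 * s / (1 + s)) := by
  have hs_pos := hs.1
  refine ⟨AffineMap.lineMap y x ((1 + s) / (2 * s)), ?_, ?_⟩
  · by_contra hw
    obtain ⟨ℓ, u, hu_lt, hu⟩ :=
      RCLike.geometric_hahn_banach_point_closed (𝕜 := ℂ) hΩ.closure isClosed_closure hw
    have h_harnack := hxy.re_le hs (h := fun z ↦ ℓ z - u)
      ⟨by fun_prop, fun z hz ↦ by simpa using (hu z (subset_closure hz)).le⟩
    rw [div_mul_eq_mul_div, le_div_iff₀ (sub_pos.mpr hs.2)] at h_harnack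
    have h_re (c : ℝ) : RCLike.re (ℓ (AffineMap.lineMap y x c)) =
        c * ((ℓ x).re - (ℓ y).re) + (ℓ y).re := by
      simp [AffineMap.lineMap_apply, RCLike.real_smul_eq_coe_smul (K := ℂ)]
    rw [h_re, div_mul_eq_mul_div, ← lt_sub_iff_add_lt, div_lt_iff₀ (by positivity)] at hu_lt
    simp only [Complex.sub_re, Complex.ofReal_re] at h_harnack
    linarith
  · rw [AffineMap.lineMap_lineMap_right]
    field_simp
    simp

/-- Properness of the distance induced by analytic discs. -/
lemma exists_isCompact_of_discJoined [ProperSpace E] {Ω A : Set E} {s : ℝ} (hΩo : IsOpen Ω)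
    (hΩc : Convex ℝ Ω) (hΩb : Bornology.IsBounded Ω) (hs : s ∈ Ioo 0 1) (hA : IsCompact A)
    (hAΩ : A ⊆ Ω) :
    ∃ Q, IsCompact Q ∧ Q ⊆ Ω ∧ ∀ x, ∀ y ∈ A, DiscJoined Ω s x y → x ∈ Q := by
  have hs_pos := hs.1
  have h_mem : 2 * s / (1 + s) ∈ Ico 0 1 := by
    refine ⟨by positivity, ?_⟩
    rw [div_lt_one (by positivity)]
    linarith [hs.2]
  obtain ⟨Q, hQ, hQΩ, h_line⟩ := exists_isCompact_lineMap_mem hΩo hΩc hΩb hA hAΩ h_mem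
  refine ⟨Q, hQ, hQΩ, fun x y hy hxy ↦ ?_⟩
  obtain ⟨w, hw, rfl⟩ := hxy.exists_eq_lineMap hΩc hs
  exact h_line y hy w hw

end DiscJoined

section FixedPoints

variable {E : Type*} [NormedAddCommGroup E] [NormedSpace ℂ E] {Ω K : Set E} {f : E → E} {s : ℝ}

lemma HolMapsTo.re_sub_re_le (hf : HolMapsTo f Ω K) (hKΩ : K ⊆ Ω) (hs : s ∈ Ioo 0 1)
    (hK : ∀ x ∈ K, ∀ y ∈ K, DiscJoined Ω s x y) {h : E → ℂ} (hh : DifferentiableOn ℂ h Ω) {r : ℝ}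
    (hr : ∀ x ∈ Ω, ∀ y ∈ Ω, (h x).re - (h y).re ≤ r) :
    ∀ x ∈ Ω, ∀ y ∈ Ω, (h (f x)).re - (h (f y)).re ≤ 2 * s / (1 + s) * r := by
  intro x hx y hy
  have hs_pos := hs.1
  have h_nonneg : HolMapsTo (fun z ↦ h z - ((h (f x)).re - r : ℝ)) Ω {w | 0 ≤ w.re} := by
    refine ⟨hh.sub_const _, fun z hz ↦ ?_⟩
    have := hr _ (hKΩ (hf.mapsTo hx)) z hz
    simp only [mem_ofPred_eq, Complex.sub_re, Complex.ofReal_re]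
    linarith
  have h_harnack := (hK _ (hf.mapsTo hy) _ (hf.mapsTo hx)).re_le hs h_nonneg
  rw [div_mul_eq_mul_div, le_div_iff₀ (sub_pos.mpr hs.2)] at h_harnack
  rw [div_mul_eq_mul_div, le_div_iff₀ (by positivity)]
  simp only [Complex.sub_re, Complex.ofReal_re] at h_harnack
  linarith

lemma HolMapsTo.re_iterate_sub_re_iterate_le (hf : HolMapsTo f Ω K) (hKΩ : K ⊆ Ω)
    (hs : s ∈ Ioo 0 1) (hK : ∀ x ∈ K, ∀ y ∈ K, DiscJoined Ω s x y) (n : ℕ) {h : E → ℂ}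
    (hh : DifferentiableOn ℂ h Ω) {r : ℝ} (hr : ∀ x ∈ Ω, ∀ y ∈ Ω, (h x).re - (h y).re ≤ r) :
    ∀ x ∈ Ω, ∀ y ∈ Ω, (h (f^[n] x)).re - (h (f^[n] y)).re ≤ (2 * s / (1 + s)) ^ n * r := by
  induction n generalizing h r with
  | zero => simpa using hr
  | succ n ih =>
    simp only [Function.iterate_succ_apply', pow_succ, mul_assoc]
    exact ih (hh.comp hf.differentiableOn (hf.mapsTo.mono_right hKΩ))
      (hf.re_sub_re_le hKΩ hs hK hh hr)

lemma HolMapsTo.dist_iterate_le (hf : HolMapsTo f Ω K) (hKΩ : K ⊆ Ω)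
    (hΩb : Bornology.IsBounded Ω) (hs : s ∈ Ioo 0 1) (hK : ∀ x ∈ K, ∀ y ∈ K, DiscJoined Ω s x y)
    (n : ℕ) {x y : E} (hx : x ∈ Ω) (hy : y ∈ Ω) :
    dist (f^[n] x) (f^[n] y) ≤ (2 * s / (1 + s)) ^ n * diam Ω := by
  obtain ⟨ℓ, hℓ_norm, hℓ⟩ := exists_dual_vector'' ℂ (f^[n] x - f^[n] y)
  have h_osc : ∀ a ∈ Ω, ∀ b ∈ Ω, (ℓ a).re - (ℓ b).re ≤ diam Ω := fun a ha b hb ↦ calc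
    (ℓ a).re - (ℓ b).re = (ℓ (a - b)).re := by simp
    _ ≤ ‖ℓ (a - b)‖ := Complex.re_le_norm _
    _ ≤ ‖a - b‖ := by simpa using ℓ.le_of_opNorm_le hℓ_norm (a - b)
    _ ≤ diam Ω := dist_eq_norm a b ▸ dist_le_diam_of_mem hΩb ha hb
  calc dist (f^[n] x) (f^[n] y) = (ℓ (f^[n] x)).re - (ℓ (f^[n] y)).re := by
        rw [← Complex.sub_re, ← map_sub, hℓ, dist_eq_norm]
        simp
    _ ≤ _ := hf.re_iterate_sub_re_iterate_le hKΩ hs hK n ℓ.differentiable.differentiableOn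
        h_osc x hx y hy

variable [NormedSpace ℝ E] [IsScalarTower ℝ ℂ E]

/-- The Earle–Hamilton fixed point theorem for convex domains. -/
lemma HolMapsTo.exists_fixedPt_of_isCompact (hf : HolMapsTo f Ω K) (hΩo : IsOpen Ω)
    (hΩc : Convex ℝ Ω) (hΩb : Bornology.IsBounded Ω) (hK : IsCompact K) (hKΩ : K ⊆ Ω) {z : E}
    (hz : z ∈ Ω) : ∃ w ∈ K, f w = w ∧ Tendsto (fun n ↦ f^[n] z) atTop (𝓝 w) := by
  obtain ⟨s, hs, h_joined⟩ := exists_discJoined_of_isCompact hΩo hΩc hK hKΩ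
  have h_maps : MapsTo f K K := hf.mapsTo.mono_left hKΩ
  have h_cauchy : CauchySeq fun n ↦ f^[n] (f z) := by
    refine cauchySeq_of_le_geometric (2 * s / (1 + s)) (diam Ω) ?_ fun n ↦ ?_
    · rw [div_lt_one (by linarith [hs.1])]
      linarith [hs.2]
    · rw [mul_comm, Function.iterate_succ_apply]
      exact hf.dist_iterate_le hKΩ hΩb hs h_joined n (hKΩ (hf.mapsTo hz))
        (hKΩ (h_maps (hf.mapsTo hz)))
  obtain ⟨w, hw, h_lim⟩ := cauchySeq_tendsto_of_isComplete hK.isComplete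
    (fun n ↦ h_maps.iterate n (hf.mapsTo hz)) h_cauchy
  exact ⟨w, hw, isFixedPt_of_tendsto_iterate h_lim
    (hf.differentiableOn.continuousOn.continuousAt (hΩo.mem_nhds (hKΩ hw))),
    (tendsto_add_atTop_iff_nat 1).mp h_lim⟩

lemma exists_fixedPt_of_approx {X : Type*} [MetricSpace X] {Q : Set X} {f : X → X}
    (hQ : IsCompact Q) (hf : ContinuousOn f Q) (h : ∀ ε > 0, ∃ w ∈ Q, dist (f w) w < ε) :
    ∃ w ∈ Q, f w = w := by
  obtain ⟨w₀, hw₀, -⟩ := h 1 one_pos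
  obtain ⟨w, hw, hw_min⟩ := hQ.exists_isMinOn ⟨w₀, hw₀⟩
    (continuous_dist.comp_continuousOn (hf.prodMk continuousOn_id))
  refine ⟨w, hw, dist_le_zero.mp (le_of_forall_pos_lt_add fun ε hε ↦ ?_)⟩
  obtain ⟨v, hv, hv_lt⟩ := h ε hε
  simpa using (hw_min hv).trans_lt hv_lt

lemma DiscJoined.iterate_lineMap (hΩ : Convex ℝ Ω) (hf : HolMapsTo f Ω Ω) {z : E}
    (hz : ∀ n, DiscJoined Ω s z (f^[n] z)) {t : ℝ} (ht : t ∈ Icc 0 1) (n : ℕ) :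
    DiscJoined Ω s ((fun x ↦ AffineMap.lineMap z (f x) t)^[n] z) (f^[n] z) := by
  induction n with
  | zero => exact hz 0
  | succ n ih =>
    have h_succ := hz (n + 1)
    rw [Function.iterate_succ_apply'] at h_succ
    rw [Function.iterate_succ_apply', Function.iterate_succ_apply']
    simpa only [AffineMap.lineMap_same_apply] using h_succ.lineMap hΩ (ih.map hf) ht

lemma HolMapsTo.exists_lineMap_eq_of_orbit_subset [ProperSpace E] (hf : HolMapsTo f Ω Ω)
    (hΩo : IsOpen Ω) (hΩc : Convex ℝ Ω) (hΩb : Bornology.IsBounded Ω) (hK : IsCompact K)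
    (hKΩ : K ⊆ Ω) {z : E} (hz : ∀ n, f^[n] z ∈ K) :
    ∃ Q, IsCompact Q ∧ Q ⊆ Ω ∧
      ∀ t ∈ Ico (0 : ℝ) 1, ∃ w ∈ Q, AffineMap.lineMap z (f w) t = w := by
  obtain ⟨s, hs, h_joined⟩ := exists_discJoined_of_isCompact hΩo hΩc hK hKΩ
  obtain ⟨Q, hQ, hQΩ, h_proper⟩ := exists_isCompact_of_discJoined hΩo hΩc hΩb hs hK hKΩ
  have hzΩ : z ∈ Ω := hKΩ (hz 0)
  refine ⟨Q, hQ, hQΩ, fun t ht ↦ ?_⟩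
  obtain ⟨L, hL, hLΩ, h_line⟩ :=
    exists_isCompact_lineMap_mem hΩo hΩc hΩb isCompact_singleton (singleton_subset_iff.mpr hzΩ) ht
  have h_maps : HolMapsTo (fun x ↦ AffineMap.lineMap z (f x) t) Ω L := by
    refine ⟨?_, fun x hx ↦ h_line z rfl _ (subset_closure (hf.mapsTo hx))⟩
    simp only [AffineMap.lineMap_apply_module, RCLike.real_smul_eq_coe_smul (K := ℂ)]
    exact (hf.differentiableOn.const_smul _).const_add _
  obtain ⟨w, -, hw_fixed, hw_lim⟩ := h_maps.exists_fixedPt_of_isCompact hΩo hΩc hΩb hL hLΩ hzΩ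
  have h_orbit (n : ℕ) : (fun x ↦ AffineMap.lineMap z (f x) t)^[n] z ∈ Q :=
    h_proper _ _ (hz n) <| .iterate_lineMap hΩc hf (fun k ↦ h_joined _ (hz 0) _ (hz k))
      (Ico_subset_Icc_self ht) n
  exact ⟨w, hQ.isClosed.mem_of_tendsto hw_lim (.of_forall h_orbit), hw_fixed⟩

lemma HolMapsTo.exists_fixedPt_of_orbit_subset [ProperSpace E] (hf : HolMapsTo f Ω Ω)
    (hΩo : IsOpen Ω) (hΩc : Convex ℝ Ω) (hΩb : Bornology.IsBounded Ω) (hK : IsCompact K)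
    (hKΩ : K ⊆ Ω) {z : E} (hz : ∀ n, f^[n] z ∈ K) : ∃ w ∈ Ω, f w = w := by
  obtain ⟨Q, hQ, hQΩ, h_fixed⟩ := hf.exists_lineMap_eq_of_orbit_subset hΩo hΩc hΩb hK hKΩ hz
  suffices h_approx : ∀ ε > 0, ∃ w ∈ Q, dist (f w) w < ε by
    obtain ⟨w, hw, hw_fixed⟩ :=
      exists_fixedPt_of_approx hQ (hf.differentiableOn.continuousOn.mono hQΩ) h_approx
    exact ⟨w, hQΩ hw, hw_fixed⟩
  intro ε hε
  obtain ⟨t, ht_lt, ht⟩ : ∃ t : ℝ, (1 - t) * diam Ω < ε ∧ t ∈ Ico 0 1 := by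
    have h_lim : Tendsto (fun t : ℝ ↦ (1 - t) * diam Ω) (𝓝[<] 1) (𝓝 ((1 - 1) * diam Ω)) :=
      (Continuous.tendsto (by fun_prop) _).mono_left nhdsWithin_le_nhds
    rw [sub_self, zero_mul] at h_lim
    exact ((h_lim.eventually_lt_const hε).and (Ico_mem_nhdsLT one_pos)).exists
  obtain ⟨w, hw, hw_fixed⟩ := h_fixed t ht
  have ht_nonneg : 0 ≤ 1 - t := sub_nonneg.mpr ht.2.le
  refine ⟨w, hw, ?_⟩
  calc dist (f w) w = dist (f w) (AffineMap.lineMap z (f w) t) := by rw [hw_fixed]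
    _ = (1 - t) * dist z (f w) := by rw [dist_right_lineMap, Real.norm_of_nonneg ht_nonneg]
    _ ≤ (1 - t) * diam Ω := by
      gcongr
      exact dist_le_diam_of_mem hΩb (hKΩ (hz 0)) (hf.mapsTo (hQΩ hw))
    _ < ε := ht_lt

end FixedPoints

section Recurrence

variable {E : Type*} [NormedAddCommGroup E] [NormedSpace ℂ E] {Ω K : Set E} {f g : E → E} {s : ℝ}

lemma exists_discJoined_of_mem_isCompact (hΩ : IsOpen Ω) (hK : IsCompact K) (hKΩ : K ⊆ Ω)
    (hs : 0 < s) {u : ℕ → E} {T : Set ℕ} (hu : ∀ n ∈ T, u n ∈ K) :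
    ∃ N, ∀ n ∈ T, ∃ m ∈ T, m ≤ N ∧ DiscJoined Ω s (u n) (u m) := by
  obtain ⟨δ, hδ, h_joined⟩ := exists_discJoined_of_dist_lt hΩ hK hKΩ hs
  have h_approx := finite_approx_of_totallyBounded
    (hK.totallyBounded.subset (image_subset_iff.mpr hu)) δ hδ
  obtain ⟨S, hST, hS_fin, h_cover⟩ :=
    (exists_subset_image_finite_and (p := (u '' T ⊆ ⋃ y ∈ ·, ball y δ))).mp
      h_approx
  obtain ⟨N, hN⟩ := hS_fin.bddAbove
  refine ⟨N, fun n hn ↦ ?_⟩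
  obtain ⟨_, ⟨m, hm, rfl⟩, h_dist⟩ := mem_iUnion₂.mp (h_cover (mem_image_of_mem u hn))
  exact ⟨m, hST hm, hN hm, h_joined _ (hu n hn) _ h_dist⟩

lemma exists_le_add_of_frequently {P : ℕ → Prop} {N : ℕ} (hP : ∃ᶠ n in atTop, P n)
    (h_back : ∀ n > N, P n → ∃ m, 1 ≤ m ∧ m ≤ N ∧ P (n - m)) (k : ℕ) : ∃ i ≤ N, P (k + i) := by
  classical
  have h_exists := frequently_atTop.mp hP k
  obtain ⟨h_le, h_find⟩ := Nat.find_spec h_exists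
  by_cases h_far : N < Nat.find h_exists - k
  · obtain ⟨m, hm, hmN, hPm⟩ := h_back _ (by lia) h_find
    exact absurd ⟨by lia, hPm⟩ (Nat.find_min h_exists (m := Nat.find h_exists - m) (by lia))
  · exact ⟨Nat.find h_exists - k, not_lt.mp h_far, by rwa [Nat.add_sub_cancel' h_le]⟩

lemma leftInvOn_iterate {α : Type*} {f g : α → α} {s : Set α} (hf : MapsTo f s s)
    (hgf : LeftInvOn g f s) (n : ℕ) : LeftInvOn g^[n] f^[n] s := by
  induction n with
  | zero => exact fun _ _ ↦ rfl
  | succ n ih =>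
    rw [Function.iterate_succ', Function.iterate_succ]
    exact hgf.comp ih hf

lemma iterate_apply_iterate_add {α : Type*} {f g : α → α} {s : Set α} (hf : MapsTo f s s)
    (hgf : LeftInvOn g f s) {x : α} (hx : x ∈ s) (m n : ℕ) : g^[m] (f^[n + m] x) = f^[n] x := by
  rw [add_comm, Function.iterate_add_apply, leftInvOn_iterate hf hgf m (hf.iterate n hx)]

lemma DiscJoined.iterate_sub (hf : HolMapsTo f Ω Ω) (hg : HolMapsTo g Ω Ω)
    (hgf : LeftInvOn g f Ω) {z : E} (hz : z ∈ Ω) {m n : ℕ} (hmn : m ≤ n)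
    (h : DiscJoined Ω s (f^[n] z) (f^[m] z)) : DiscJoined Ω s (f^[n - m] z) z := by
  obtain ⟨k, rfl⟩ := Nat.exists_eq_add_of_le' hmn
  have := h.map (hg.iterate m)
  rwa [iterate_apply_iterate_add hf.mapsTo hgf hz, leftInvOn_iterate hf.mapsTo hgf m hz,
    ← Nat.add_sub_cancel k m] at this

lemma HolMapsTo.frequently_discJoined (hf : HolMapsTo f Ω Ω) (hg : HolMapsTo g Ω Ω)
    (hgf : LeftInvOn g f Ω) (hΩ : IsOpen Ω) (hK : IsCompact K) (hKΩ : K ⊆ Ω) (hs : 0 < s) {z : E}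
    (hz : z ∈ Ω) (h_visit : ∃ᶠ n in atTop, f^[n] z ∈ K) :
    ∃ᶠ n in atTop, DiscJoined Ω s (f^[n] z) z := by
  obtain ⟨N, hN⟩ := exists_discJoined_of_mem_isCompact hΩ hK hKΩ hs
    (u := (f^[·] z)) (T := {n | f^[n] z ∈ K}) fun _ hn ↦ hn
  refine frequently_atTop.mpr fun k ↦ ?_
  obtain ⟨n, hn, hnK⟩ := frequently_atTop.mp h_visit (k + N)
  obtain ⟨m, -, hmN, h_joined⟩ := hN n hnK
  exact ⟨n - m, by lia, h_joined.iterate_sub hf hg hgf hz (by lia)⟩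

variable [NormedSpace ℝ E] [IsScalarTower ℝ ℂ E] [ProperSpace E]

lemma HolMapsTo.frequently_mem_of_frequently_inter_nonempty (hf : HolMapsTo f Ω Ω)
    (hΩo : IsOpen Ω) (hΩc : Convex ℝ Ω) (hΩb : Bornology.IsBounded Ω) (hK : IsCompact K)
    (hKΩ : K ⊆ Ω) (h_meet : ∃ᶠ n in atTop, (f^[n] '' K ∩ K).Nonempty) {z : E} (hz : z ∈ Ω) :
    ∃ Q, IsCompact Q ∧ Q ⊆ Ω ∧ ∃ᶠ n in atTop, f^[n] z ∈ Q := by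
  obtain ⟨s, hs, h_joined⟩ :=
    exists_discJoined_of_isCompact hΩo hΩc (hK.insert z) (insert_subset hz hKΩ)
  obtain ⟨Q, hQ, hQΩ, h_proper⟩ := exists_isCompact_of_discJoined hΩo hΩc hΩb hs hK hKΩ
  refine ⟨Q, hQ, hQΩ, h_meet.mono fun n ↦ ?_⟩
  rintro ⟨_, ⟨a, ha, rfl⟩, ha'⟩
  exact h_proper _ _ ha' <|
    (h_joined z (mem_insert _ _) a (mem_insert_of_mem _ ha)).map (hf.iterate n)

/-- Całka's theorem for the distance induced by analytic discs. -/
lemma HolMapsTo.exists_orbit_subset_of_frequently (hf : HolMapsTo f Ω Ω) (hg : HolMapsTo g Ω Ω)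
    (hgf : LeftInvOn g f Ω) (hΩo : IsOpen Ω) (hΩc : Convex ℝ Ω) (hΩb : Bornology.IsBounded Ω)
    (hK : IsCompact K) (hKΩ : K ⊆ Ω) {z : E} (hz : z ∈ Ω)
    (h_visit : ∃ᶠ n in atTop, f^[n] z ∈ K) :
    ∃ Q, IsCompact Q ∧ Q ⊆ Ω ∧ ∀ n, f^[n] z ∈ Q := by
  obtain ⟨s, hs⟩ : (Ioo (0 : ℝ) 1).Nonempty := nonempty_Ioo.mpr one_pos
  obtain ⟨L, hL, hLΩ, h_near⟩ := exists_isCompact_of_discJoined hΩo hΩc hΩb hs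
    isCompact_singleton (singleton_subset_iff.mpr hz)
  obtain ⟨N, hN⟩ := exists_discJoined_of_mem_isCompact hΩo hL hLΩ hs.1
    (u := (f^[·] z)) (T := {n | 1 ≤ n ∧ f^[n] z ∈ L}) fun _ hn ↦ hn.2
  have h_return : ∀ k, ∃ i ≤ N, DiscJoined Ω s (f^[k + i] z) z := by
    refine exists_le_add_of_frequently
      (hf.frequently_discJoined hg hgf hΩo hK hKΩ hs.1 hz h_visit) fun n hn h_joined ↦ ?_
    obtain ⟨m, ⟨hm, -⟩, hmN, h_nm⟩ := hN n ⟨by lia, h_near _ _ rfl h_joined⟩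
    exact ⟨m, hm, hmN, h_nm.iterate_sub hf hg hgf hz (by lia)⟩
  obtain ⟨Q, hQ, hQΩ, h_proper⟩ := exists_isCompact_of_discJoined hΩo hΩc hΩb hs
    (((finite_Iic N).image (g^[·] z)).isCompact)
    (image_subset_iff.mpr fun i _ ↦ hg.mapsTo.iterate i hz)
  refine ⟨Q, hQ, hQΩ, fun k ↦ ?_⟩
  obtain ⟨i, hi, h_joined⟩ := h_return k
  refine h_proper _ (g^[i] z) (mem_image_of_mem _ hi) ?_
  simpa only [iterate_apply_iterate_add hf.mapsTo hgf hz] using h_joined.map (hg.iterate i)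

/-- The iterates of `f` form a compactly divergent sequence of self-maps of `Ω`. -/
def CompactlyDivergent {X : Type*} [TopologicalSpace X] (Ω : Set X) (f : X → X) : Prop :=
  ∀ K : Set X, IsCompact K → K ⊆ Ω → ∃ N : ℕ, ∀ j ≥ N, f^[j] '' K ∩ K = ∅

theorem HolMapsTo.compactlyDivergent_of_forall_ne (hf : HolMapsTo f Ω Ω) (hg : HolMapsTo g Ω Ω)
    (hgf : LeftInvOn g f Ω) (hΩo : IsOpen Ω) (hΩc : Convex ℝ Ω) (hΩb : Bornology.IsBounded Ω)
    (h_ne : ∀ x ∈ Ω, f x ≠ x) : CompactlyDivergent Ω f := by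
  by_contra h_not
  obtain ⟨K, hK, hKΩ, h_meet⟩ : ∃ K, IsCompact K ∧ K ⊆ Ω ∧
      ∃ᶠ n in atTop, (f^[n] '' K ∩ K).Nonempty := by
    simpa [CompactlyDivergent, frequently_atTop, nonempty_iff_ne_empty] using h_not
  obtain ⟨_, z, -, hz⟩ := h_meet.exists
  obtain ⟨L, hL, hLΩ, h_visit⟩ :=
    hf.frequently_mem_of_frequently_inter_nonempty hΩo hΩc hΩb hK hKΩ h_meet (hKΩ hz)
  obtain ⟨Q, hQ, hQΩ, h_orbit⟩ :=
    hf.exists_orbit_subset_of_frequently hg hgf hΩo hΩc hΩb hL hLΩ (hKΩ hz) h_visit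
  obtain ⟨w, hw, hw_fixed⟩ := hf.exists_fixedPt_of_orbit_subset hΩo hΩc hΩb hQ hQΩ h_orbit
  exact h_ne w hw hw_fixed

end Recurrence

section Separation

variable {E : Type*} [NormedAddCommGroup E] [NormedSpace ℂ E] [NormedSpace ℝ E]
  [IsScalarTower ℝ ℂ E] {Ω K : Set E} {f : E → E}

lemma exists_differentiable_re_nonneg (hΩo : IsOpen Ω) (hΩc : Convex ℝ Ω) {p : E} (hp : p ∉ Ω)
    (hK : IsCompact K) (hKΩ : K ⊆ Ω) {c : ℝ} (hc : 0 ≤ c) :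
    ∃ h : E → ℂ, Differentiable ℂ h ∧ h p = 0 ∧ (∀ x ∈ Ω, 0 ≤ (h x).re) ∧
      ∀ x ∈ K, c ≤ (h x).re := by
  obtain ⟨ℓ, hℓ⟩ := RCLike.geometric_hahn_banach_open_point (𝕜 := ℂ) hΩc hΩo hp
  have h_pos : ∀ x ∈ Ω, 0 < (ℓ (p - x)).re := fun x hx ↦ by simpa using hℓ x hx
  obtain ⟨a, ha, haK⟩ := hK.exists_forall_le' (f := fun x ↦ (ℓ (p - x)).re)
    (Continuous.continuousOn (by fun_prop)) fun x hx ↦ h_pos x (hKΩ hx)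
  refine ⟨fun x ↦ (c / a : ℝ) * ℓ (p - x), by fun_prop, by simp, fun x hx ↦ ?_, fun x hx ↦ ?_⟩ <;>
    rw [Complex.re_ofReal_mul]
  · exact mul_nonneg (by positivity) (h_pos x hx).le
  · calc c = c / a * a := (div_mul_cancel₀ c ha.ne').symm
      _ ≤ c / a * (ℓ (p - x)).re := by gcongr; exact haK x hx

lemma CompactlyDivergent.exists_tendsto_notMem {X : Type*} [PseudoMetricSpace X] [ProperSpace X]
    {Ω : Set X} {f : X → X} (h_div : CompactlyDivergent Ω f) (hf : MapsTo f Ω Ω) (hΩo : IsOpen Ω)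
    (hΩb : Bornology.IsBounded Ω) {z : X} (hz : z ∈ Ω) :
    ∃ p ∉ Ω, ∃ φ : ℕ → ℕ, StrictMono φ ∧ Tendsto (fun k ↦ f^[φ k] z) atTop (𝓝 p) := by
  obtain ⟨p, -, φ, hφ, h_lim⟩ := hΩb.isCompact_closure.tendsto_subseq (x := (f^[·] z))
    fun j ↦ subset_closure (hf.iterate j hz)
  refine ⟨p, fun hp ↦ ?_, φ, hφ, h_lim⟩
  obtain ⟨r, hr, h_ball⟩ := nhds_basis_closedBall.mem_iff.mp (hΩo.mem_nhds hp)
  obtain ⟨N, hN⟩ := h_div _ ((isCompact_closedBall p r).insert z) (insert_subset hz h_ball)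
  obtain ⟨k, hk, hkN⟩ := ((h_lim.eventually (closedBall_mem_nhds p hr)).and
    (hφ.tendsto_atTop.eventually_ge_atTop N)).exists
  exact (hN _ hkN).subset ⟨mem_image_of_mem _ (mem_insert _ _), mem_insert_of_mem _ hk⟩

lemma CompactlyDivergent.exists_separating [ProperSpace E] (h_div : CompactlyDivergent Ω f)
    (hf : HolMapsTo f Ω Ω) (hΩo : IsOpen Ω) (hΩc : Convex ℝ Ω) (hΩb : Bornology.IsBounded Ω)
    (hΩne : Ω.Nonempty) (hK : IsCompact K) (hKΩ : K ⊆ Ω) :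
    ∃ j ≥ 1, ∃ g : E → ℂ, Differentiable ℂ g ∧ (∀ y ∈ K, ‖g y‖ ≤ 1 / 4) ∧
      ∀ y ∈ f^[j] '' K, ‖1 - g y‖ ≤ 1 / 4 := by
  obtain ⟨z, hz⟩ := hΩne
  obtain ⟨p, hp, φ, hφ, h_lim⟩ := h_div.exists_tendsto_notMem hf.mapsTo hΩo hΩb hz
  obtain ⟨h, h_diff, hp_zero, h_nonneg, hK_le⟩ :=
    exists_differentiable_re_nonneg hΩo hΩc hp hK hKΩ (c := 3) (by norm_num)
  obtain ⟨s, hs, h_joined⟩ :=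
    exists_discJoined_of_isCompact hΩo hΩc (hK.insert z) (insert_subset hz hKΩ)
  have h_small : Tendsto (fun k ↦ (1 + s) / (1 - s) * ‖h (f^[φ k] z)‖) atTop (𝓝 0) := by
    have := ((h_diff.continuous.tendsto p).comp h_lim).norm.const_mul ((1 + s) / (1 - s))
    rwa [hp_zero, norm_zero, mul_zero] at this
  obtain ⟨k, hk, hk_one⟩ := ((h_small.eventually_lt_const (show (0 : ℝ) < 1 / 8 by norm_num)).and
    (hφ.tendsto_atTop.eventually_ge_atTop 1)).exists
  refine ⟨φ k, hk_one, fun x ↦ Complex.exp (-h x), by fun_prop, fun y hy ↦ ?_, ?_⟩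
  · rw [Complex.norm_exp, Complex.neg_re, Real.exp_neg, one_div]
    apply inv_anti₀ (by norm_num)
    linarith [hK_le y hy, Real.add_one_le_exp (h y).re]
  · rintro _ ⟨x, hx, rfl⟩
    have h_harnack := (h_joined z (mem_insert _ _) x (mem_insert_of_mem _ hx)).norm_le hs
      (h := h ∘ f^[φ k]) <|
        HolMapsTo.comp ⟨h_diff.differentiableOn, h_nonneg⟩ (hf.iterate (φ k))
    have h_norm : ‖-h (f^[φ k] x)‖ ≤ 1 / 8 := (norm_neg _).trans_le (h_harnack.trans hk.le)
    rw [norm_sub_rev]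
    linarith [Complex.norm_exp_sub_one_le (h_norm.trans (by norm_num))]

end Separation

section Smoothstep

/-- The cubic with superattracting fixed points `0` and `1`: its iterates turn a rough separation of
two sets by a holomorphic function into an arbitrarily sharp one. -/
def smoothstep (w : ℂ) : ℂ := 3 * w ^ 2 - 2 * w ^ 3

lemma differentiable_smoothstep_iterate (n : ℕ) : Differentiable ℂ smoothstep^[n] := by
  have : Differentiable ℂ smoothstep := by unfold smoothstep; fun_prop
  exact this.iterate n

lemma smoothstep_iterate_one_sub (n : ℕ) (w : ℂ) :
    smoothstep^[n] (1 - w) = 1 - smoothstep^[n] w := by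
  have : Function.Semiconj (1 - ·) smoothstep smoothstep := fun w ↦ by unfold smoothstep; ring
  exact ((this.iterate_right n) w).symm

lemma norm_smoothstep_iterate_le {w : ℂ} (hw : ‖w‖ ≤ 1 / 4) (n : ℕ) :
    ‖smoothstep^[n] w‖ ≤ (7 / 8) ^ n * (1 / 4) := by
  induction n with
  | zero => simpa using hw
  | succ n ih =>
    rw [Function.iterate_succ_apply']
    set v := smoothstep^[n] w
    have hv : ‖v‖ ≤ 1 / 4 :=
      ih.trans (mul_le_of_le_one_left (by norm_num) (pow_le_one₀ (by norm_num) (by norm_num)))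
    have h_factor : ‖3 - 2 * v‖ ≤ 7 / 2 := (norm_sub_le _ _).trans (by simp; linarith)
    calc ‖smoothstep v‖ = ‖v‖ * ‖v‖ * ‖3 - 2 * v‖ := by
          rw [← norm_mul, ← norm_mul]
          unfold smoothstep
          ring_nf
      _ ≤ (7 / 8) ^ n * (1 / 4) * (1 / 4) * (7 / 2) := by gcongr
      _ = (7 / 8) ^ (n + 1) * (1 / 4) := by ring

lemma exists_differentiable_norm_le_norm_one_sub_le {ε : ℝ} (hε : 0 < ε) :
    ∃ p : ℂ → ℂ, Differentiable ℂ p ∧ (∀ w, ‖w‖ ≤ 1 / 4 → ‖p w‖ ≤ ε) ∧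
      ∀ w, ‖1 - w‖ ≤ 1 / 4 → ‖1 - p w‖ ≤ ε := by
  obtain ⟨n, hn⟩ := exists_pow_lt_of_lt_one hε (show (7 / 8 : ℝ) < 1 by norm_num)
  have h_le {w : ℂ} (hw : ‖w‖ ≤ 1 / 4) : ‖smoothstep^[n] w‖ ≤ ε := by
    linarith [norm_smoothstep_iterate_le hw n, show (0 : ℝ) < (7 / 8) ^ n by positivity]
  refine ⟨smoothstep^[n], differentiable_smoothstep_iterate n, fun w hw ↦ h_le hw, fun w hw ↦ ?_⟩
  rw [← smoothstep_iterate_one_sub]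
  exact h_le hw

end Smoothstep

section OHull

variable {n : ℕ} {Ω K L : Set (CSpace n)} {x : CSpace n}

lemma norm_le_of_mem_oHull (hx : x ∈ OHull Ω K) {f : CSpace n → ℂ} (hf : DifferentiableOn ℂ f Ω)
    {B : ℝ} (hB : 0 ≤ B) (h : ∀ y ∈ K, ‖f y‖ ≤ B) : ‖f x‖ ≤ B :=
  (hx.2 f hf).trans (Real.iSup_le (fun y ↦ h y y.2) hB)

lemma norm_le_iSup_norm {X F : Type*} [TopologicalSpace X] [SeminormedAddCommGroup F] {K : Set X}
    (hK : IsCompact K) {f : X → F} (hf : ContinuousOn f K) {x : X} (hx : x ∈ K) :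
    ‖f x‖ ≤ ⨆ y : K, ‖f y‖ := by
  obtain ⟨B, hB⟩ := hK.exists_bound_of_continuousOn hf
  exact le_ciSup (f := fun y : K ↦ ‖f y‖) ⟨B, forall_mem_range.mpr fun y ↦ hB y y.2⟩ ⟨x, hx⟩

lemma subset_oHull (hK : IsCompact K) (hKΩ : K ⊆ Ω) : K ⊆ OHull Ω K := fun _ hx ↦
  ⟨hKΩ hx, fun _ hf ↦ norm_le_iSup_norm hK (hf.continuousOn.mono hKΩ) hx⟩

lemma oHull_singleton (hx : x ∈ Ω) : OHull Ω {x} = {x} := by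
  refine Subset.antisymm (fun y hy ↦ ?_)
    (subset_oHull isCompact_singleton (singleton_subset_iff.mpr hx))
  ext i
  have := norm_le_of_mem_oHull hy (f := fun z ↦ z i - x i) (by fun_prop) le_rfl (by simp)
  exact sub_eq_zero.mp (norm_le_zero_iff.mp this)

lemma HolMapsTo.mapsTo_oHull {m : ℕ} {Ω' : Set (CSpace m)} {f : CSpace n → CSpace m}
    (hf : HolMapsTo f Ω Ω') (hK : IsCompact K) (hKΩ : K ⊆ Ω) :
    MapsTo f (OHull Ω K) (OHull Ω' (f '' K)) := fun _ hx ↦ by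
  refine ⟨hf.mapsTo hx.1, fun h hh ↦ norm_le_of_mem_oHull hx (hh.comp hf.differentiableOn hf.mapsTo)
    (Real.iSup_nonneg fun _ ↦ norm_nonneg _) fun y hy ↦ ?_⟩
  exact norm_le_iSup_norm (hK.image_of_continuousOn (hf.differentiableOn.continuousOn.mono hKΩ))
    (hh.continuousOn.mono (hf.mapsTo.mono_left hKΩ).image_subset) (mem_image_of_mem f hy)

lemma oHull_image {m : ℕ} {Ω' : Set (CSpace m)} {f : CSpace n → CSpace m}
    {g : CSpace m → CSpace n} (hf : HolMapsTo f Ω Ω') (hg : HolMapsTo g Ω' Ω)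
    (hgf : InvOn g f Ω Ω') (hK : IsCompact K) (hKΩ : K ⊆ Ω) :
    OHull Ω' (f '' K) = f '' OHull Ω K := by
  refine Subset.antisymm (fun y hy ↦ ?_) (hf.mapsTo_oHull hK hKΩ).image_subset
  have hgy := hg.mapsTo_oHull
    (hK.image_of_continuousOn (hf.differentiableOn.continuousOn.mono hKΩ))
    (hf.mapsTo.mono_left hKΩ).image_subset hy
  rw [hgf.1.image_image' hKΩ] at hgy
  exact ⟨g y, hgy, hgf.2 hy.1⟩

lemma exists_eq_one_norm_le_of_notMem_oHull (hK : IsCompact K) (hKΩ : K ⊆ Ω) (hx : x ∈ Ω)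
    (hxK : x ∉ OHull Ω K) {ε : ℝ} (hε : 0 < ε) :
    ∃ f : CSpace n → ℂ, DifferentiableOn ℂ f Ω ∧ f x = 1 ∧ ∀ y ∈ K, ‖f y‖ ≤ ε := by
  obtain ⟨f, hf, hfx⟩ : ∃ f : CSpace n → ℂ, DifferentiableOn ℂ f Ω ∧
      ⨆ y : K, ‖f y‖ < ‖f x‖ := by
    by_contra! h
    exact hxK ⟨hx, h⟩
  have hfx_pos : 0 < ‖f x‖ := (Real.iSup_nonneg fun _ ↦ norm_nonneg _).trans_lt hfx
  obtain ⟨m, hm⟩ := exists_pow_lt_of_lt_one hε ((div_lt_one hfx_pos).mpr hfx)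
  refine ⟨fun z ↦ (f z * (f x)⁻¹) ^ m, (hf.mul_const _).fun_pow m, ?_, fun y hy ↦ ?_⟩
  · beta_reduce
    rw [mul_inv_cancel₀ (norm_pos_iff.mp hfx_pos), one_pow]
  · rw [norm_pow, norm_mul, norm_inv, ← div_eq_mul_inv]
    refine le_trans ?_ hm.le
    gcongr
    exact norm_le_iSup_norm hK (hf.continuousOn.mono hKΩ) hy

lemma exists_pos_forall_norm_le_of_notMem_oHull (hK : IsCompact K) (hKΩ : K ⊆ Ω)
    (hL : IsCompact L) (hLΩ : L ⊆ Ω) (hx : x ∈ Ω) (hxK : x ∉ OHull Ω K) :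
    ∃ ε > 0, ∀ P : CSpace n → ℂ, DifferentiableOn ℂ P Ω → (∀ y ∈ K, ‖P y‖ ≤ 2) →
      (∀ y ∈ L, ‖P y‖ ≤ ε) → x ∈ OHull Ω (K ∪ L) → ‖P x‖ ≤ 1 / 3 := by
  obtain ⟨a, ha, hax, haK⟩ :=
    exists_eq_one_norm_le_of_notMem_oHull hK hKΩ hx hxK (show (0 : ℝ) < 1 / 6 by norm_num)
  obtain ⟨A, hA⟩ := hL.exists_bound_of_continuousOn (ha.continuousOn.mono hLΩ)
  refine ⟨1 / (3 * (|A| + 1)), by positivity, fun P hP hPK hPL hxKL ↦ ?_⟩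
  have h_product : ‖a x * P x‖ ≤ 1 / 3 := by
    refine norm_le_of_mem_oHull hxKL (ha.fun_mul hP) (by norm_num) ?_
    rintro y (hy | hy) <;> rw [norm_mul]
    · calc ‖a y‖ * ‖P y‖ ≤ 1 / 6 * 2 := by gcongr; exacts [haK y hy, hPK y hy]
        _ = 1 / 3 := by norm_num
    · calc ‖a y‖ * ‖P y‖ ≤ (|A| + 1) * (1 / (3 * (|A| + 1))) := by
            gcongr
            · linarith [hA y hy, le_abs_self A]
            · exact hPL y hy
        _ = 1 / 3 := by field_simp
  rwa [hax, one_mul] at h_product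

/-- Kallin's lemma. -/
lemma oHull_union_subset (hK : IsCompact K) (hKΩ : K ⊆ Ω) (hL : IsCompact L) (hLΩ : L ⊆ Ω)
    {g : CSpace n → ℂ} (hg : DifferentiableOn ℂ g Ω) (hgK : ∀ y ∈ K, ‖1 - g y‖ ≤ 1 / 4)
    (hgL : ∀ y ∈ L, ‖g y‖ ≤ 1 / 4) : OHull Ω (K ∪ L) ⊆ OHull Ω K ∪ OHull Ω L := by
  by_contra! h_not
  obtain ⟨x, hx, hx_not⟩ := not_subset.mp h_not
  rw [mem_union, not_or] at hx_not
  obtain ⟨ε, hε, hεK⟩ :=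
    exists_pos_forall_norm_le_of_notMem_oHull hK hKΩ hL hLΩ hx.1 hx_not.1
  obtain ⟨δ, hδ, hδL⟩ :=
    exists_pos_forall_norm_le_of_notMem_oHull hL hLΩ hK hKΩ hx.1 hx_not.2
  obtain ⟨p, hp, hp_zero, hp_one⟩ :=
    exists_differentiable_norm_le_norm_one_sub_le (show 0 < min 1 (min ε δ) by positivity)
  simp only [le_min_iff] at hp_zero hp_one
  have hp_diff := hp.comp_differentiableOn hg
  have h_le_two {w : ℂ} (hw : ‖w‖ ≤ 1) : ‖1 - w‖ ≤ 2 :=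
    (norm_sub_le _ _).trans (by rw [norm_one]; linarith)
  have h_left : ‖p (g x)‖ ≤ 1 / 3 := by
    refine hεK (p ∘ g) hp_diff (fun y hy ↦ ?_) (fun y hy ↦ (hp_zero _ (hgL y hy)).2.1) hx
    simpa using h_le_two (hp_one _ (hgK y hy)).1
  have h_right : ‖1 - p (g x)‖ ≤ 1 / 3 :=
    hδL (fun y ↦ 1 - p (g y)) (hp_diff.const_sub 1)
      (fun y hy ↦ h_le_two (hp_zero _ (hgL y hy)).1)
      (fun y hy ↦ (hp_one _ (hgK y hy)).2.2) (union_comm K L ▸ hx)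
  have := norm_add_le (1 - p (g x)) (p (g x))
  rw [sub_add_cancel, norm_one] at this
  linarith

end OHull

section GenTranslation

variable {n : ℕ} {Ω : Set (CSpace n)} {f g : CSpace n → CSpace n}

lemma IsGenTranslation.forall_ne (hf : IsGenTranslation Ω f) : ∀ x ∈ Ω, f x ≠ x := by
  intro x hx h_fixed
  obtain ⟨j, -, h_disjoint, -⟩ := hf {x} isCompact_singleton (singleton_subset_iff.mpr hx)
    (oHull_singleton hx)
  exact h_disjoint.subset ⟨⟨x, rfl, Function.iterate_fixed h_fixed j⟩, rfl⟩

lemma CompactlyDivergent.isGenTranslation (h_div : CompactlyDivergent Ω f)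
    (hf : HolMapsTo f Ω Ω) (hg : HolMapsTo g Ω Ω) (hgf : InvOn g f Ω Ω) (hΩo : IsOpen Ω)
    (hΩc : Convex ℝ Ω) (hΩb : Bornology.IsBounded Ω) (hΩne : Ω.Nonempty) :
    IsGenTranslation Ω f := by
  intro K hK hKΩ hK_hull
  obtain ⟨j, hj, h, h_diff, h_zero, h_one⟩ :=
    h_div.exists_separating hf hΩo hΩc hΩb hΩne hK hKΩ
  have hfK : IsCompact (f^[j] '' K) :=
    hK.image_of_continuousOn ((hf.iterate j).differentiableOn.continuousOn.mono hKΩ)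
  have hfKΩ : f^[j] '' K ⊆ Ω := ((hf.iterate j).mapsTo.mono_left hKΩ).image_subset
  have hfK_hull : OHull Ω (f^[j] '' K) = f^[j] '' K := by
    rw [oHull_image (hf.iterate j) (hg.iterate j) ⟨leftInvOn_iterate hf.mapsTo hgf.1 j,
      leftInvOn_iterate hg.mapsTo hgf.2 j⟩ hK hKΩ, hK_hull]
  refine ⟨j, hj, eq_empty_of_forall_notMem fun y hy ↦ ?_, Subset.antisymm ?_ ?_⟩
  · have := norm_add_le (1 - h y) (h y)
    rw [sub_add_cancel, norm_one] at this
    linarith [h_one y hy.1, h_zero y hy.2]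
  · simpa only [hK_hull, hfK_hull] using
      oHull_union_subset hfK hfKΩ hK hKΩ h_diff.differentiableOn h_one h_zero
  · exact subset_oHull (hfK.union hK) (union_subset hfKΩ hKΩ)

end GenTranslation

/-- For an automorphism `τ` of a bounded convex domain `Ω ⋐ ℂⁿ`, the following
are equivalent: `τ` is a generalized translation; `τ` has no fixed points; the iterates of `τ`
are compactly divergent. -/
theorem stmt_11 {n : ℕ} (Ω : Set (CSpace n)) (hΩopen : IsOpen Ω) (hΩconv : Convex ℝ Ω)
    (hΩbdd : Bornology.IsBounded Ω) (hΩne : Ω.Nonempty)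
    (τ : CSpace n → CSpace n) (hτdiff : DifferentiableOn ℂ τ Ω) (hτmaps : Set.MapsTo τ Ω Ω)
    (hτbij : ∃ σ : CSpace n → CSpace n, DifferentiableOn ℂ σ Ω ∧ Set.MapsTo σ Ω Ω ∧
      (∀ x ∈ Ω, σ (τ x) = x) ∧ (∀ x ∈ Ω, τ (σ x) = x)) :
    (IsGenTranslation Ω τ ↔ ∀ x ∈ Ω, τ x ≠ x) ∧
    ((∀ x ∈ Ω, τ x ≠ x) ↔
      ∀ K : Set (CSpace n), IsCompact K → K ⊆ Ω →
        ∃ N : ℕ, ∀ j ≥ N, (τ^[j] '' K) ∩ K = ∅) := by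
  obtain ⟨σ, hσdiff, hσmaps, hστ, hτσ⟩ := hτbij
  have hτ : HolMapsTo τ Ω Ω := ⟨hτdiff, hτmaps⟩
  have hσ : HolMapsTo σ Ω Ω := ⟨hσdiff, hσmaps⟩
  have h_trans_ne : IsGenTranslation Ω τ → ∀ x ∈ Ω, τ x ≠ x := IsGenTranslation.forall_ne
  have h_ne_div : (∀ x ∈ Ω, τ x ≠ x) → CompactlyDivergent Ω τ :=
    hτ.compactlyDivergent_of_forall_ne hσ hστ hΩopen hΩconv hΩbdd
  have h_div_trans : CompactlyDivergent Ω τ → IsGenTranslation Ω τ := fun h ↦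
    h.isGenTranslation hτ hσ ⟨hστ, hτσ⟩ hΩopen hΩconv hΩbdd hΩne
  exact ⟨⟨h_trans_ne, h_div_trans ∘ h_ne_div⟩, ⟨h_ne_div, h_trans_ne ∘ h_div_trans⟩⟩
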